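/- Fix S ⊆ N and write H_SS := (I_S − β P_{SS})⁻¹. Then the matrix A^S = N^S H^S has the block form: A^S restricted to S×S equals (1−β) H_SS; A^S restricted to S×S^c equals β H_SS P_{S S^c}; A^S restricted to S^c×S equals −β P_{S^c S} H_SS; and A^S restricted to S^c×S^c equals (1/(1−β)) (I_{S^c} − β P_{S^c S^c} + β A^S_{S^c S} P_{S S^c}), where A^S_{S^c S} denotes the S^c×S block of A^S. (Equation (20) of the paper.) -/

import Mathlib

open Matrix BigOperators
open scoped Classical

noncomputable section

/-- Transition matrix of the `S`-active policy: row `i` of `P` if `i ∈ S`,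
the `i`-th standard unit row otherwise. -/
def PAct {N : Type*} [DecidableEq N] (P : Matrix N N ℝ) (S : Finset N) : Matrix N N ℝ :=
  fun i j => if i ∈ S then P i j else if i = j then 1 else 0

/-- Transition matrix of the `Sᶜ`-active policy. -/
def PPas {N : Type*} [DecidableEq N] (P : Matrix N N ℝ) (S : Finset N) : Matrix N N ℝ :=
  fun i j => if i ∈ S then (if i = j then 1 else 0) else P i j

/-- Basis matrix `B^S = I - β P^S`. -/
def BMat {N : Type*} [Fintype N] [DecidableEq N] (β : ℝ) (P : Matrix N N ℝ) (S : Finset N) :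
    Matrix N N ℝ := 1 - β • PAct P S

/-- Non-basic matrix `N^S = I - β P^{Sᶜ}`. -/
def NMat {N : Type*} [Fintype N] [DecidableEq N] (β : ℝ) (P : Matrix N N ℝ) (S : Finset N) :
    Matrix N N ℝ := 1 - β • PPas P S

/-- Basis inverse `H^S = (B^S)⁻¹`. -/
def HMat {N : Type*} [Fintype N] [DecidableEq N] (β : ℝ) (P : Matrix N N ℝ) (S : Finset N) :
    Matrix N N ℝ := (BMat β P S)⁻¹

/-- Tableau matrix `A^S = N^S · H^S`. -/
def AMat {N : Type*} [Fintype N] [DecidableEq N] (β : ℝ) (P : Matrix N N ℝ) (S : Finset N) :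
    Matrix N N ℝ := NMat β P S * HMat β P S

/-- Work measure `g^S = H^S · 1_S`. -/
def gWork {N : Type*} [Fintype N] [DecidableEq N] (β : ℝ) (P : Matrix N N ℝ) (S : Finset N) :
    N → ℝ := (HMat β P S).mulVec (fun j => if j ∈ S then 1 else 0)

/-- Reward measure `f^S = H^S · (R·1_S)`. -/
def fRew {N : Type*} [Fintype N] [DecidableEq N] (β : ℝ) (P : Matrix N N ℝ) (R : N → ℝ)
    (S : Finset N) : N → ℝ := (HMat β P S).mulVec (fun j => if j ∈ S then R j else 0)

/-- Marginal work `w_i^S`. -/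
def wMarg {N : Type*} [Fintype N] [DecidableEq N] (β : ℝ) (P : Matrix N N ℝ) (S : Finset N)
    (i : N) : ℝ :=
  if i ∈ S then (1 - β) * gWork β P S i
  else 1 + β * ∑ j ∈ S, P i j * gWork β P S j

/-- Marginal reward `r_i^S`. -/
def rMarg {N : Type*} [Fintype N] [DecidableEq N] (β : ℝ) (P : Matrix N N ℝ) (R : N → ℝ)
    (S : Finset N) (i : N) : ℝ :=
  if i ∈ S then (1 - β) * fRew β P R S i
  else R i + β * ∑ j ∈ S, P i j * fRew β P R S j

/-- Marginal productivity rate `ν_i^S = r_i^S / w_i^S`. -/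
def nuMarg {N : Type*} [Fintype N] [DecidableEq N] (β : ℝ) (P : Matrix N N ℝ) (R : N → ℝ)
    (S : Finset N) (i : N) : ℝ := rMarg β P R S i / wMarg β P S i

/-- Feasibility of a pair of row vectors `(x⁰, x¹)` for initial state `i`:
`x⁰, x¹ ≥ 0` and `(1-β) x⁰ + x¹ (I - β P) = e_i`. -/
def Feasible {N : Type*} [Fintype N] [DecidableEq N] (β : ℝ) (P : Matrix N N ℝ) (i : N)
    (x0 x1 : N → ℝ) : Prop :=
  (∀ j, 0 ≤ x0 j) ∧ (∀ j, 0 ≤ x1 j) ∧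
    (1 - β) • x0 + Matrix.vecMul x1 (1 - β • P) = Pi.single i 1

/-- Modified reward vector `R̂ = R - (I - βP)·Q`. -/
def Rhat {N : Type*} [Fintype N] [DecidableEq N] (β : ℝ) (P : Matrix N N ℝ) (R Q : N → ℝ) :
    N → ℝ := fun i => R i - ((1 - β • P).mulVec Q) i

/-- Submatrix of `P` with rows and columns indexed by `S`. -/
def Psub {N : Type*} (P : Matrix N N ℝ) (S : Finset N) :
    Matrix {x // x ∈ S} {x // x ∈ S} ℝ := fun a b => P a.1 b.1

/-!
Everything follows from `A^S B^S = N^S`. Since `B^S` is block upper triangular for the partition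
`S, Sᶜ`, with diagonal blocks `I - β P_SS` and `(1 - β) I`, this equation is solved one block column
at a time: the columns in `S` only involve `A_{·S} (I - β P_SS) = N_{·S}`, and those in `Sᶜ` then
follow from `(1 - β) A_{·Sᶜ} = N_{·Sᶜ} + β A_{·S} P_{S Sᶜ}`. Substituting the blocks of `N^S` gives
equation (20).
-/

section BlockTriangular

variable {R l m n : Type*} [CommRing R] [Fintype n] [DecidableEq n]

-- `Matrix.toBlock_mul_eq_add` carries the `Fintype` instance of a decidable subtype, which is not
-- definitionally the one found for a coerced `Finset`.
theorem toBlock_mul_eq_add_finset (A : Matrix l n R) (B : Matrix n m R) (p : l → Prop)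
    (S : Finset n) (r : m → Prop) :
    (A * B).toBlock p r = A.toBlock p (· ∈ S) * B.toBlock (· ∈ S) r
      + A.toBlock p (· ∉ S) * B.toBlock (· ∉ S) r := by
  convert toBlock_mul_eq_add p (· ∈ S) r A B

theorem toBlock_eq_toBlock_mul_mul_inv (A : Matrix m n R) {B : Matrix n n R} (p : m → Prop)
    {S : Finset n} (hzero : B.toBlock (· ∉ S) (· ∈ S) = 0)
    (hunit : IsUnit (B.toBlock (· ∈ S) (· ∈ S)).det) :
    A.toBlock p (· ∈ S) = (A * B).toBlock p (· ∈ S) * (B.toBlock (· ∈ S) (· ∈ S))⁻¹ := by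
  rw [toBlock_mul_eq_add_finset A B p S, hzero, Matrix.mul_zero, add_zero,
    mul_nonsing_inv_cancel_right _ _ hunit]

theorem isUnit_det_of_toBlock_eq_zero {B : Matrix n n R} {S : Finset n}
    (hzero : B.toBlock (· ∉ S) (· ∈ S) = 0) (hmem : IsUnit (B.toBlock (· ∈ S) (· ∈ S)).det)
    (hnotMem : IsUnit (B.toBlock (· ∉ S) (· ∉ S)).det) : IsUnit B.det := by
  rw [twoBlockTriangular_det B (· ∈ S) fun i hi j hj => congrFun₂ hzero ⟨i, hi⟩ ⟨j, hj⟩]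
  convert hmem.mul hnotMem <;> rfl

end BlockTriangular

section Invertibility

theorem isUnit_det_one_sub_of_sum_norm_lt_one {K n : Type*} [NormedField K] [Fintype n]
    [DecidableEq n] {Q : Matrix n n K} (hQ : ∀ i, ∑ j, ‖Q i j‖ < 1) : IsUnit (1 - Q).det := by
  refine isUnit_iff_ne_zero.mpr (det_ne_zero_of_sum_row_lt_diag fun k => ?_)
  calc ∑ j ∈ Finset.univ.erase k, ‖(1 - Q) k j‖
      = ∑ j ∈ Finset.univ.erase k, ‖Q k j‖ := by
        refine Finset.sum_congr rfl fun j hj => ?_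
        rw [Matrix.sub_apply, one_apply_ne (Finset.ne_of_mem_erase hj).symm, zero_sub, norm_neg]
    _ < 1 - ‖Q k k‖ := by
        linarith [hQ k, Finset.add_sum_erase _ (fun j => ‖Q k j‖) (Finset.mem_univ k)]
    _ ≤ ‖(1 - Q) k k‖ := by
        simpa only [Matrix.sub_apply, one_apply_eq, norm_one] using norm_sub_norm_le 1 (Q k k)

theorem isUnit_det_one_sub_smul_Psub {N : Type*} [Fintype N] [DecidableEq N] {P : Matrix N N ℝ}
    (hP0 : ∀ i j, 0 ≤ P i j) (hP1 : ∀ i, ∑ j, P i j ≤ 1) {β : ℝ} (hβ0 : 0 ≤ β) (hβ1 : β < 1)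
    (S : Finset N) : IsUnit (1 - β • Psub P S).det := by
  refine isUnit_det_one_sub_of_sum_norm_lt_one fun a => ?_
  have hrow : ∑ b, Psub P S a b ≤ 1 :=
    calc ∑ b, Psub P S a b = ∑ j ∈ S, P a.1 j := Finset.sum_coe_sort S (P a.1)
      _ ≤ ∑ j, P a.1 j :=
        Finset.sum_le_sum_of_subset_of_nonneg S.subset_univ fun j _ _ => hP0 _ j
      _ ≤ 1 := hP1 _
  calc ∑ b, ‖(β • Psub P S) a b‖ = β * ∑ b, Psub P S a b := by
        rw [Finset.mul_sum]
        exact Finset.sum_congr rfl fun b _ => Real.norm_of_nonneg (mul_nonneg hβ0 (hP0 _ _))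
    _ ≤ β := mul_le_of_le_one_right hβ0 hrow
    _ < 1 := hβ1

end Invertibility

section Tableau

variable {N : Type*} [Fintype N] [DecidableEq N] {β : ℝ} {P : Matrix N N ℝ} {S : Finset N}

theorem BMat_toBlock_mem_mem : (BMat β P S).toBlock (· ∈ S) (· ∈ S) = 1 - β • Psub P S := by
  ext a b
  simp [BMat, PAct, Psub, one_apply]

theorem BMat_toBlock_mem_notMem :
    (BMat β P S).toBlock (· ∈ S) (· ∉ S) = -(β • P.toBlock (· ∈ S) (· ∉ S)) := by
  ext a b
  simp [BMat, PAct, one_apply_ne (ne_of_mem_of_not_mem a.2 b.2)]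

theorem BMat_toBlock_notMem_mem : (BMat β P S).toBlock (· ∉ S) (· ∈ S) = 0 := by
  ext a b
  have hab : a.1 ≠ b.1 := (ne_of_mem_of_not_mem b.2 a.2).symm
  simp [BMat, PAct, a.2, hab]

theorem BMat_toBlock_notMem_notMem : (BMat β P S).toBlock (· ∉ S) (· ∉ S) = (1 - β) • 1 := by
  ext a b
  simp [BMat, PAct, a.2, one_apply, Subtype.val_inj, ite_sub_ite]

theorem NMat_toBlock_mem_mem : (NMat β P S).toBlock (· ∈ S) (· ∈ S) = (1 - β) • 1 := by
  ext a b
  simp [NMat, PPas, one_apply, ite_sub_ite]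

theorem NMat_toBlock_mem_notMem : (NMat β P S).toBlock (· ∈ S) (· ∉ S) = 0 := by
  ext a b
  have hab : a.1 ≠ b.1 := ne_of_mem_of_not_mem a.2 b.2
  simp [NMat, PPas, hab]

theorem NMat_toBlock_notMem_mem :
    (NMat β P S).toBlock (· ∉ S) (· ∈ S) = -(β • P.toBlock (· ∉ S) (· ∈ S)) := by
  ext a b
  simp [NMat, PPas, a.2, one_apply_ne (ne_of_mem_of_not_mem b.2 a.2).symm]

theorem NMat_toBlock_notMem_notMem :
    (NMat β P S).toBlock (· ∉ S) (· ∉ S) = 1 - β • P.toBlock (· ∉ S) (· ∉ S) := by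
  ext a b
  simp [NMat, PPas, a.2, one_apply, Subtype.val_inj]

theorem isUnit_det_BMat (hβ : β ≠ 1) (hS : IsUnit (1 - β • Psub P S).det) :
    IsUnit (BMat β P S).det := by
  refine isUnit_det_of_toBlock_eq_zero BMat_toBlock_notMem_mem ?_ ?_
  · rwa [BMat_toBlock_mem_mem]
  · rw [BMat_toBlock_notMem_notMem, det_smul, det_one, mul_one]
    exact (sub_ne_zero.mpr hβ.symm).isUnit.pow _

theorem AMat_mul_BMat (hβ : β ≠ 1) (hS : IsUnit (1 - β • Psub P S).det) :
    AMat β P S * BMat β P S = NMat β P S :=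
  nonsing_inv_mul_cancel_right _ _ (isUnit_det_BMat hβ hS)

theorem AMat_toBlock_mem (hβ : β ≠ 1) (hS : IsUnit (1 - β • Psub P S).det) (p : N → Prop) :
    (AMat β P S).toBlock p (· ∈ S)
      = (NMat β P S).toBlock p (· ∈ S) * (1 - β • Psub P S)⁻¹ := by
  have hB : IsUnit ((BMat β P S).toBlock (· ∈ S) (· ∈ S)).det := by rwa [BMat_toBlock_mem_mem]
  rw [toBlock_eq_toBlock_mul_mul_inv _ p BMat_toBlock_notMem_mem hB, AMat_mul_BMat hβ hS,
    BMat_toBlock_mem_mem]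

theorem AMat_toBlock_notMem (hβ : β ≠ 1) (hS : IsUnit (1 - β • Psub P S).det) (p : N → Prop) :
    (AMat β P S).toBlock p (· ∉ S)
      = (1 - β)⁻¹ • ((NMat β P S).toBlock p (· ∉ S)
          + β • ((AMat β P S).toBlock p (· ∈ S) * P.toBlock (· ∈ S) (· ∉ S))) := by
  rw [← AMat_mul_BMat hβ hS, toBlock_mul_eq_add_finset _ _ p S (· ∉ S), BMat_toBlock_mem_notMem,
    BMat_toBlock_notMem_notMem, Matrix.mul_neg, Matrix.mul_smul, Matrix.mul_smul, Matrix.mul_one,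
    neg_add_eq_sub, sub_add_cancel, inv_smul_smul₀ (sub_ne_zero.mpr hβ.symm)]

theorem AMat_toBlock_mem_mem (hβ : β ≠ 1) (hS : IsUnit (1 - β • Psub P S).det) :
    (AMat β P S).toBlock (· ∈ S) (· ∈ S) = (1 - β) • (1 - β • Psub P S)⁻¹ := by
  rw [AMat_toBlock_mem hβ hS, NMat_toBlock_mem_mem, Matrix.smul_mul, Matrix.one_mul]

theorem AMat_toBlock_mem_notMem (hβ : β ≠ 1) (hS : IsUnit (1 - β • Psub P S).det) :
    (AMat β P S).toBlock (· ∈ S) (· ∉ S)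
      = β • ((1 - β • Psub P S)⁻¹ * P.toBlock (· ∈ S) (· ∉ S)) := by
  rw [AMat_toBlock_notMem hβ hS, NMat_toBlock_mem_notMem, AMat_toBlock_mem_mem hβ hS, zero_add,
    Matrix.smul_mul, smul_comm β, inv_smul_smul₀ (sub_ne_zero.mpr hβ.symm)]

theorem AMat_toBlock_notMem_mem (hβ : β ≠ 1) (hS : IsUnit (1 - β • Psub P S).det) :
    (AMat β P S).toBlock (· ∉ S) (· ∈ S)
      = -(β • (P.toBlock (· ∉ S) (· ∈ S) * (1 - β • Psub P S)⁻¹)) := by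
  rw [AMat_toBlock_mem hβ hS, NMat_toBlock_notMem_mem, Matrix.neg_mul, Matrix.smul_mul]

theorem AMat_toBlock_notMem_notMem (hβ : β ≠ 1) (hS : IsUnit (1 - β • Psub P S).det) :
    (AMat β P S).toBlock (· ∉ S) (· ∉ S)
      = (1 - β)⁻¹ • (1 - β • P.toBlock (· ∉ S) (· ∉ S)
          + β • ((AMat β P S).toBlock (· ∉ S) (· ∈ S) * P.toBlock (· ∈ S) (· ∉ S))) := by
  rw [AMat_toBlock_notMem hβ hS, NMat_toBlock_notMem_notMem]

end Tableau

theorem stmt14_general {N : Type*} [Fintype N] [DecidableEq N] (P : Matrix N N ℝ) (β : ℝ)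
    (hβ : β ≠ 1) (S : Finset N) (hS : IsUnit (1 - β • Psub P S).det) :
    (∀ a b : {x // x ∈ S},
        AMat β P S a.1 b.1 = (1 - β) * ((1 - β • Psub P S)⁻¹) a b) ∧
    (∀ (a : {x // x ∈ S}) (j : N), j ∉ S →
        AMat β P S a.1 j
          = β * ∑ k : {x // x ∈ S}, ((1 - β • Psub P S)⁻¹) a k * P k.1 j) ∧
    (∀ i : N, i ∉ S → ∀ b : {x // x ∈ S},
        AMat β P S i b.1
          = -β * ∑ k : {x // x ∈ S}, P i k.1 * ((1 - β • Psub P S)⁻¹) k b) ∧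
    (∀ i j : N, i ∉ S → j ∉ S →
        AMat β P S i j
          = (1 / (1 - β)) * ((if i = j then (1:ℝ) else 0) - β * P i j
              + β * ∑ k ∈ S, AMat β P S i k * P k j)) := by
  refine ⟨fun a b => ?_, fun a j hj => ?_, fun i hi b => ?_, fun i j hi hj => ?_⟩
  · exact congrFun₂ (AMat_toBlock_mem_mem hβ hS) a b
  · exact congrFun₂ (AMat_toBlock_mem_notMem hβ hS) a ⟨j, hj⟩
  · rw [neg_mul]
    exact congrFun₂ (AMat_toBlock_notMem_mem hβ hS) ⟨i, hi⟩ b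
  · have hij := congrFun₂ (AMat_toBlock_notMem_notMem hβ hS) ⟨i, hi⟩ ⟨j, hj⟩
    rw [one_div, ← Finset.sum_coe_sort S fun k => AMat β P S i k * P k j]
    simpa [one_apply, mul_apply] using hij

/-- equation (20): block form of the tableau matrix `A^S`,
where `H_SS = (I_S - β P_SS)⁻¹`. -/
theorem stmt14 {N : Type*} [Fintype N] [DecidableEq N] [Nonempty N]
    (P : Matrix N N ℝ) (hP0 : ∀ i j, 0 ≤ P i j) (hP1 : ∀ i, ∑ j, P i j = 1)
    (β : ℝ) (hβ0 : 0 < β) (hβ1 : β < 1) (S : Finset N) :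
    (∀ a b : {x // x ∈ S},
        AMat β P S a.1 b.1 = (1 - β) * ((1 - β • Psub P S)⁻¹) a b) ∧
    (∀ (a : {x // x ∈ S}) (j : N), j ∉ S →
        AMat β P S a.1 j
          = β * ∑ k : {x // x ∈ S}, ((1 - β • Psub P S)⁻¹) a k * P k.1 j) ∧
    (∀ i : N, i ∉ S → ∀ b : {x // x ∈ S},
        AMat β P S i b.1
          = -β * ∑ k : {x // x ∈ S}, P i k.1 * ((1 - β • Psub P S)⁻¹) k b) ∧
    (∀ i j : N, i ∉ S → j ∉ S →
        AMat β P S i j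
          = (1 / (1 - β)) * ((if i = j then (1:ℝ) else 0) - β * P i j
              + β * ∑ k ∈ S, AMat β P S i k * P k j)) := by
  exact stmt14_general P β hβ1.ne S
    (isUnit_det_one_sub_smul_Psub hP0 (fun i => (hP1 i).le) hβ0.le hβ1 S)
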